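/- Let a ∈ (0,1) and K ≥ 0, and let h : ℕ → ℝ satisfy, for every N ≥ 0, h(N+1) ≤ h(N) − 2·log(a/2^N) + (2 − K·(a/2^{N+1})²)·log(a/2^{N+1}). Then there exists a constant C₄ ≥ 0, depending only on a and K, such that for every N ≥ 0: h(N) ≤ h(0) − 2·log a + 2·log(a/2^N) + C₄. -/

import Mathlib

/-!
Put `u N = h N - α * log (ρ N)`. The recursion says that `u` grows at step `N` by at most
`-K * ρ (N + 1) ^ n * log (ρ (N + 1))`. Since `x ^ (n - 1) * log x → 0` as `x → 0` for `1 < n`,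
these increments are absolutely summable as soon as the radii `ρ N` are, so `u` is bounded above
by `u 0` plus a constant depending only on `ρ`, `K` and `n`.
-/

open Filter Topology

theorem le_add_tsum_abs_of_succ_le_add {u e : ℕ → ℝ} (he : Summable e)
    (hu : ∀ n, u (n + 1) ≤ u n + e n) (n : ℕ) : u n ≤ u 0 + ∑' i, |e i| := by
  rw [← sub_le_iff_le_add']
  calc u n - u 0 = ∑ i ∈ Finset.range n, (u (i + 1) - u i) := (Finset.sum_range_sub u n).symm
    _ ≤ ∑ i ∈ Finset.range n, |e i| :=
      Finset.sum_le_sum fun i _ ↦ (sub_le_iff_le_add'.2 (hu i)).trans (le_abs_self (e i))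
    _ ≤ ∑' i, |e i| := he.abs.sum_le_tsum _ fun i _ ↦ abs_nonneg (e i)

theorem tendsto_pow_mul_log_zero {n : ℕ} (hn : n ≠ 0) :
    Tendsto (fun x : ℝ ↦ x ^ n * Real.log x) (𝓝 0) (𝓝 0) := by
  obtain ⟨m, rfl⟩ := Nat.exists_eq_succ_of_ne_zero hn
  have hcont : Continuous fun x : ℝ ↦ x ^ m * (x * Real.log x) :=
    (continuous_pow m).mul Real.continuous_mul_log
  simpa [pow_succ, mul_assoc] using hcont.tendsto 0

theorem summable_pow_mul_log {ι : Type*} {ρ : ι → ℝ} (hρ : Summable ρ) {n : ℕ} (hn : 1 < n) :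
    Summable fun i ↦ ρ i ^ n * Real.log (ρ i) := by
  obtain ⟨m, rfl⟩ := Nat.exists_eq_add_of_lt hn
  have hlim : Tendsto (fun i ↦ ρ i ^ (m + 1) * Real.log (ρ i)) cofinite (𝓝 0) :=
    (tendsto_pow_mul_log_zero m.succ_ne_zero).comp hρ.tendsto_cofinite_zero
  refine (hρ.norm.mul_tendsto_const hlim).congr fun i ↦ ?_
  ring

theorem summable_div_two_pow (a : ℝ) : Summable fun N : ℕ ↦ a / 2 ^ N := by
  simpa [div_eq_mul_inv] using summable_geometric_two.mul_left a

theorem stmt_10_general {ρ : ℕ → ℝ} (_hρ_pos : ∀ N, 0 < ρ N) (hρ : Summable ρ) (α K : ℝ)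
    {n : ℕ} (hn : 1 < n) :
    ∃ C : ℝ, 0 ≤ C ∧ ∀ h : ℕ → ℝ,
      (∀ N, h (N + 1) ≤ h N - α * Real.log (ρ N)
        + (α - K * ρ (N + 1) ^ n) * Real.log (ρ (N + 1))) →
      ∀ N, h N ≤ h 0 - α * Real.log (ρ 0) + α * Real.log (ρ N) + C := by
  let e : ℕ → ℝ := fun N ↦ -K * (ρ (N + 1) ^ n * Real.log (ρ (N + 1)))
  have he : Summable e :=
    ((summable_nat_add_iff 1).2 (summable_pow_mul_log hρ hn)).mul_left (-K)
  refine ⟨∑' N, |e N|, tsum_nonneg fun N ↦ abs_nonneg (e N), fun h hstep N ↦ ?_⟩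
  let u : ℕ → ℝ := fun N ↦ h N - α * Real.log (ρ N)
  have hu : ∀ N, u (N + 1) ≤ u N + e N := fun N ↦ by
    simp only [u, e]
    linarith [hstep N]
  have hbound : u N ≤ u 0 + ∑' N, |e N| := le_add_tsum_abs_of_succ_le_add he hu N
  simp only [u] at hbound
  linarith

theorem stmt_10 (a K : ℝ) (ha0 : 0 < a) (ha1 : a < 1) (hK : 0 ≤ K) :
    ∃ C₄ : ℝ, 0 ≤ C₄ ∧ ∀ h : ℕ → ℝ,
      (∀ N : ℕ, h (N+1) ≤ h N - 2 * Real.log (a / 2^N)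
        + (2 - K * (a / 2^(N+1))^2) * Real.log (a / 2^(N+1))) →
      ∀ N : ℕ, h N ≤ h 0 - 2 * Real.log a + 2 * Real.log (a / 2^N) + C₄ := by
  simpa only [pow_zero, div_one] using
    stmt_10_general (fun N ↦ by positivity) (summable_div_two_pow a) 2 K one_lt_two
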